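/- arXiv:1506.00456 — 3 statements merged into one kernel-verified Lean document; each statement's English description precedes it below -/
import Mathlib

section
/- Let ε > 0 and Re > 0 be real parameters. Suppose u, v, w, p : ℝ² × [0,1] × ℝ → ℝ are smooth functions of (x, y, z, t) satisfying, at every point of ℝ² × [0,1] × ℝ, the linearized Navier–Stokes volume equations: u_t − (√ε/Re)(u_xx + ε u_yy + u_zz/ε) + p_x = 0, v_t − (√ε/Re)(v_xx + ε v_yy + v_zz/ε) + √ε p_y = 0, w_t − (√ε/Re)(w_xx + ε w_yy + w_zz/ε) + p_z = 0, and u_x + √ε v_y + w_z/ε = 0. Then w satisfies at every such point the fourth-order equation (∂_z² + ε ∂_x² + ε² ∂_y²)(−Re √ε ∂_t + (∂_z² + ε ∂_x² + ε² ∂_y²)) w = 0. -/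
noncomputable section

/-- Partial derivative with respect to the first variable `x`. -/
def pdx (f : ℝ → ℝ → ℝ → ℝ → ℝ) : ℝ → ℝ → ℝ → ℝ → ℝ :=
  fun x y z t => deriv (fun x' => f x' y z t) x

/-- Partial derivative with respect to the second variable `y`. -/
def pdy (f : ℝ → ℝ → ℝ → ℝ → ℝ) : ℝ → ℝ → ℝ → ℝ → ℝ :=
  fun x y z t => deriv (fun y' => f x y' z t) y

/-- Partial derivative with respect to the third variable `z`. -/
def pdz (f : ℝ → ℝ → ℝ → ℝ → ℝ) : ℝ → ℝ → ℝ → ℝ → ℝ :=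
  fun x y z t => deriv (fun z' => f x y z' t) z

/-- Partial derivative with respect to the fourth variable `t`. -/
def pdt (f : ℝ → ℝ → ℝ → ℝ → ℝ) : ℝ → ℝ → ℝ → ℝ → ℝ :=
  fun x y z t => deriv (fun t' => f x y z t') t

/-- The operator `∂_z² + ε ∂_x² + ε² ∂_y²`. -/
def Lop (ε : ℝ) (f : ℝ → ℝ → ℝ → ℝ → ℝ) : ℝ → ℝ → ℝ → ℝ → ℝ :=
  fun x y z t =>
    pdz (pdz f) x y z t + ε * pdx (pdx f) x y z t + ε ^ 2 * pdy (pdy f) x y z t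

/-!
Partial derivatives of smooth functions commute, so constant-coefficient operators form a
commutative ring acting on smooth functions. Multiplied by `-Re √ε`, the momentum equations read
`h • uᵢ = aᵢ • p`, with `h = -Re √ε ∂_t + L`, the gradient `a = (∂_x, √ε ∂_y, ∂_z)` and
`Re √ε` absorbed into `p`; multiplied by `ε`, the continuity equation reads `∑ bᵢ • uᵢ = 0`, where
`∑ bᵢ aᵢ = L`. Applying `h` to the latter gives `L • p = 0`, and applying `L` to the former gives
`L • h • uᵢ = aᵢ • L • p = 0`. Equations on the closed slab may be differentiated because a smooth
function vanishing there has vanishing derivative there, on the boundary too.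
-/

open scoped Manifold ContDiff IsMulCommutative

section ConstantCoefficientOperators

/-- Smooth maps `E → F` between normed spaces, as a case of Mathlib's smooth maps between
manifolds, from which they inherit their vector space structure. -/
abbrev SmoothMap (𝕜 E F : Type*) [NontriviallyNormedField 𝕜] [NormedAddCommGroup E]
    [NormedSpace 𝕜 E] [NormedAddCommGroup F] [NormedSpace 𝕜 F] : Type _ :=
  C^∞⟮𝓘(𝕜, E), E; 𝓘(𝕜, F), F⟯

variable {𝕜 E F : Type*} [NontriviallyNormedField 𝕜] [NormedAddCommGroup E] [NormedSpace 𝕜 E]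
  [NormedAddCommGroup F] [NormedSpace 𝕜 F]

theorem SmoothMap.contDiff (f : SmoothMap 𝕜 E F) : ContDiff 𝕜 ∞ f :=
  f.contMDiff.contDiff

theorem SmoothMap.contDiff_fderiv (f : SmoothMap 𝕜 E F) : ContDiff 𝕜 ∞ (fderiv 𝕜 f) :=
  f.contDiff.fderiv_right le_rfl

theorem SmoothMap.differentiableAt (f : SmoothMap 𝕜 E F) (q : E) : DifferentiableAt 𝕜 f q :=
  f.contDiff.differentiable (by simp) q

/-- The directional derivative along a fixed vector, as an operator on smooth maps. -/
def dirDeriv (e : E) : Module.End 𝕜 (SmoothMap 𝕜 E F) where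
  toFun f := ⟨fun q => fderiv 𝕜 f q e,
    (f.contDiff_fderiv.clm_apply contDiff_const).contMDiff⟩
  map_add' f g := by
    ext q
    exact DFunLike.congr_fun (fderiv_add (f.differentiableAt q) (g.differentiableAt q)) e
  map_smul' c f := by
    ext q
    exact DFunLike.congr_fun (fderiv_const_smul (f.differentiableAt q) c) e

theorem dirDeriv_apply (e : E) (f : SmoothMap 𝕜 E F) (q : E) :
    dirDeriv e f q = fderiv 𝕜 f q e :=
  rfl

theorem deriv_comp_eq_dirDeriv_apply (f : SmoothMap 𝕜 E F) {c : 𝕜 → E} {e : E} {s : 𝕜}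
    (hc : HasDerivAt c e s) : deriv (fun r => f (c r)) s = dirDeriv e f (c s) :=
  ((f.differentiableAt (c s)).hasFDerivAt.comp_hasDerivAt s hc).deriv

theorem dirDeriv_dirDeriv_apply (a b : E) (f : SmoothMap 𝕜 E F) (q : E) :
    dirDeriv a (dirDeriv b f) q = fderiv 𝕜 (fderiv 𝕜 f) q a b := by
  have hf : DifferentiableAt 𝕜 (fderiv 𝕜 f) q :=
    f.contDiff_fderiv.differentiable (by simp) q
  change fderiv 𝕜 (fun r => fderiv 𝕜 f r b) q a = _
  simp [fderiv_clm_apply hf (differentiableAt_const b)]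

variable (𝕜 E F) in
/-- The ring of linear differential operators with constant scalar coefficients. -/
def constCoeffDiffOp : Subalgebra 𝕜 (Module.End 𝕜 (SmoothMap 𝕜 E F)) :=
  Algebra.adjoin 𝕜 (Set.range dirDeriv)

/-- The directional derivative along a fixed vector, as an element of the ring of
constant-coefficient operators. -/
def dirDiffOp (e : E) : constCoeffDiffOp 𝕜 E F :=
  ⟨dirDeriv e, Algebra.subset_adjoin ⟨e, rfl⟩⟩

theorem dirDeriv_apply_eq_zero {S : Set E} (hS : UniqueDiffOn 𝕜 S) {f : SmoothMap 𝕜 E F}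
    (hf : ∀ q ∈ S, f q = 0) (e : E) {q : E} (hq : q ∈ S) : dirDeriv e f q = 0 := by
  have hzero : HasFDerivWithinAt f (0 : E →L[𝕜] F) S q :=
    (hasFDerivWithinAt_const 0 q S).congr hf (hf q hq)
  have hfderiv : fderiv 𝕜 f q = 0 :=
    hS.eq hq (f.differentiableAt q).hasFDerivAt.hasFDerivWithinAt hzero
  rw [dirDeriv_apply, hfderiv, zero_apply]

/-- The smooth maps vanishing on `S`. Unique differentiability of `S` makes their derivatives
vanish on `S` as well, boundary points included, so that they form a submodule over the ring of
differential operators. -/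
def vanishingOn (S : Set E) (hS : UniqueDiffOn 𝕜 S) :
    Submodule (constCoeffDiffOp 𝕜 E F) (SmoothMap 𝕜 E F) where
  carrier := {f | ∀ q ∈ S, f q = 0}
  zero_mem' _ _ := rfl
  add_mem' {f g} hf hg q hq := by
    rw [ContMDiffMap.coe_add, Pi.add_apply, hf q hq, hg q hq, add_zero]
  smul_mem' := by
    rintro ⟨D, hD⟩ f hf
    change ∀ q ∈ S, D f q = 0
    induction hD using Algebra.adjoin_induction generalizing f with
    | mem D hD =>
      obtain ⟨e, rfl⟩ := hD
      exact fun q hq => dirDeriv_apply_eq_zero hS hf e hq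
    | algebraMap c => exact fun q hq => (congrArg (c • ·) (hf q hq)).trans (smul_zero c)
    | add _ _ _ _ h₁ h₂ =>
      exact fun q hq => (congrArg₂ (· + ·) (h₁ hf q hq) (h₂ hf q hq)).trans (add_zero 0)
    | mul _ _ _ _ h₁ h₂ => exact h₁ (h₂ hf)

end ConstantCoefficientOperators

section Commutativity

variable {𝕜 E F : Type*} [RCLike 𝕜] [NormedAddCommGroup E] [NormedSpace 𝕜 E]
  [NormedAddCommGroup F] [NormedSpace 𝕜 F]

theorem commute_dirDeriv (a b : E) :
    Commute (dirDeriv a : Module.End 𝕜 (SmoothMap 𝕜 E F)) (dirDeriv b) := by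
  ext f q
  have hsymm : IsSymmSndFDerivAt 𝕜 f q :=
    f.contDiff.contDiffAt.isSymmSndFDerivAt <| by
      simpa only [minSmoothness_of_isRCLikeNormedField] using ENat.LEInfty.out
  simpa only [Module.End.mul_apply, dirDeriv_dirDeriv_apply] using hsymm a b

instance isMulCommutative_constCoeffDiffOp : IsMulCommutative (constCoeffDiffOp 𝕜 E F) :=
  Algebra.isMulCommutative_adjoin 𝕜 <| by
    rintro _ ⟨a, rfl⟩ _ ⟨b, rfl⟩
    exact commute_dirDeriv a b

end Commutativity

section Elimination

variable {R M ι : Type*} [CommRing R] [AddCommGroup M] [Module R M] [Fintype ι]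
  {N : Submodule R M} {a b : ι → R} {h : R} {u : ι → M} {p : M}

theorem sum_mul_smul_mem_of_sum_smul_mem (hmom : ∀ i, h • u i - a i • p ∈ N)
    (hdiv : ∑ i, b i • u i ∈ N) : (∑ i, b i * a i) • p ∈ N := by
  have hp : (∑ i, b i * a i) • p =
      h • ∑ i, b i • u i - ∑ i, b i • (h • u i - a i • p) := by
    simp only [Finset.sum_smul, Finset.smul_sum, smul_sub, Finset.sum_sub_distrib, smul_smul,
      mul_comm h, sub_sub_cancel]
  rw [hp]
  exact N.sub_mem (N.smul_mem h hdiv) (N.sum_mem fun i _ => N.smul_mem (b i) (hmom i))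

theorem sum_mul_smul_smul_mem_of_sum_smul_mem (hmom : ∀ i, h • u i - a i • p ∈ N)
    (hdiv : ∑ i, b i • u i ∈ N) (i : ι) : (∑ j, b j * a j) • h • u i ∈ N := by
  have hu : (∑ j, b j * a j) • h • u i =
      (∑ j, b j * a j) • (h • u i - a i • p) + a i • (∑ j, b j * a j) • p := by
    rw [smul_sub, smul_comm (a i), sub_add_cancel]
  rw [hu]
  exact N.add_mem (N.smul_mem _ (hmom i))
    (N.smul_mem _ (sum_mul_smul_mem_of_sum_smul_mem hmom hdiv))

end Elimination

section Operators

/-- Smooth real functions of `(x, y, z, t)`. -/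
abbrev SmoothFun4 : Type :=
  SmoothMap ℝ (ℝ × ℝ × ℝ × ℝ) ℝ

/-- The ring of constant-coefficient differential operators in `(x, y, z, t)`. -/
abbrev DiffOp4 : Subalgebra ℝ (Module.End ℝ SmoothFun4) :=
  constCoeffDiffOp ℝ (ℝ × ℝ × ℝ × ℝ) ℝ

/-- The operator `∂_x` of `DiffOp4`. -/
def opDx : DiffOp4 :=
  dirDiffOp (1, 0, 0, 0)

/-- The operator `∂_y` of `DiffOp4`. -/
def opDy : DiffOp4 :=
  dirDiffOp (0, 1, 0, 0)

/-- The operator `∂_z` of `DiffOp4`. -/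
def opDz : DiffOp4 :=
  dirDiffOp (0, 0, 1, 0)

/-- The operator `∂_t` of `DiffOp4`. -/
def opDt : DiffOp4 :=
  dirDiffOp (0, 0, 0, 1)

/-- The counterpart of `Lop ε` in the ring `DiffOp4`. -/
def opL (ε : ℝ) : DiffOp4 :=
  opDz ^ 2 + ε • opDx ^ 2 + ε ^ 2 • opDy ^ 2

/-- The components of the scaled gradient `(∂_x, √ε ∂_y, ∂_z)` through which the pressure enters the
momentum equations. -/
def opGrad (ε : ℝ) : Fin 3 → DiffOp4 :=
  ![opDx, √ε • opDy, opDz]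

/-- The components of the scaled divergence `(ε ∂_x, ε √ε ∂_y, ∂_z)`, which is `ε` times the one in
the continuity equation. -/
def opDiv (ε : ℝ) : Fin 3 → DiffOp4 :=
  ![ε • opDx, (ε * √ε) • opDy, opDz]

/-- The operator `-Re √ε ∂_t + L` that the momentum equations apply to each velocity component,
once multiplied by `-Re √ε`. -/
def opMomentum (ε Re : ℝ) : DiffOp4 :=
  -(Re * √ε) • opDt + opL ε

theorem sum_opDiv_mul_opGrad {ε : ℝ} (hε : 0 ≤ ε) : ∑ i, opDiv ε i * opGrad ε i = opL ε := by
  have hsq : ε * √ε * √ε = ε ^ 2 := by rw [mul_assoc, Real.mul_self_sqrt hε, sq]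
  rw [Fin.sum_univ_three]
  change ε • opDx * opDx + (ε * √ε) • opDy * √ε • opDy + opDz * opDz = opL ε
  rw [opL, smul_mul_assoc, smul_mul_smul_comm, hsq, ← sq, ← sq, ← sq]
  abel

end Operators

section Curried

/-- A smooth function on `ℝ⁴` as a function of four separate variables, the form in which `pdx`,
`pdy`, `pdz`, `pdt` and `Lop` take their arguments. -/
def curry4 (f : SmoothFun4) : ℝ → ℝ → ℝ → ℝ → ℝ :=
  fun x y z t => f (x, y, z, t)

theorem exists_curry4_eq {f : ℝ → ℝ → ℝ → ℝ → ℝ}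
    (hf : ContDiff ℝ ∞ fun q : ℝ × ℝ × ℝ × ℝ => f q.1 q.2.1 q.2.2.1 q.2.2.2) :
    ∃ g, curry4 g = f :=
  ⟨⟨_, hf.contMDiff⟩, rfl⟩

variable (f : SmoothFun4)

theorem pdx_curry4 : pdx (curry4 f) = curry4 (opDx • f) := by
  ext x y z t
  exact deriv_comp_eq_dirDeriv_apply f ((hasDerivAt_id x).prodMk (hasDerivAt_const x (y, z, t)))

theorem pdy_curry4 : pdy (curry4 f) = curry4 (opDy • f) := by
  ext x y z t
  exact deriv_comp_eq_dirDeriv_apply f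
    ((hasDerivAt_const y x).prodMk ((hasDerivAt_id y).prodMk (hasDerivAt_const y (z, t))))

theorem pdz_curry4 : pdz (curry4 f) = curry4 (opDz • f) := by
  ext x y z t
  exact deriv_comp_eq_dirDeriv_apply f ((hasDerivAt_const z x).prodMk
    ((hasDerivAt_const z y).prodMk ((hasDerivAt_id z).prodMk (hasDerivAt_const z t))))

theorem pdt_curry4 : pdt (curry4 f) = curry4 (opDt • f) := by
  ext x y z t
  exact deriv_comp_eq_dirDeriv_apply f ((hasDerivAt_const t x).prodMk
    ((hasDerivAt_const t y).prodMk ((hasDerivAt_const t z).prodMk (hasDerivAt_id t))))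

theorem Lop_curry4 (ε : ℝ) : Lop ε (curry4 f) = curry4 (opL ε • f) := by
  ext x y z t
  simp only [Lop, pdx_curry4, pdy_curry4, pdz_curry4, opL, pow_two opDx, pow_two opDy,
    pow_two opDz]
  rfl

theorem opMomentum_curry4 (ε Re : ℝ) :
    (fun x y z t => -(Re * √ε) * pdt (curry4 f) x y z t + Lop ε (curry4 f) x y z t) =
      curry4 (opMomentum ε Re • f) := by
  simp only [pdt_curry4, Lop_curry4]
  rfl

end Curried

section VolumeEquations

variable {ε Re : ℝ} {S : Set (ℝ × ℝ × ℝ × ℝ)}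

theorem neg_mul_pdt_add_Lop_eq (hε : 0 < ε) (hRe : Re ≠ 0) {f : ℝ → ℝ → ℝ → ℝ → ℝ}
    {x y z t g : ℝ}
    (h : pdt f x y z t - (√ε / Re) *
      (pdx (pdx f) x y z t + ε * pdy (pdy f) x y z t + pdz (pdz f) x y z t / ε) + g = 0) :
    -(Re * √ε) * pdt f x y z t + Lop ε f x y z t = Re * √ε * g := by
  have hsq : √ε / Re * (Re * √ε) = ε := by
    rw [← mul_assoc, div_mul_cancel₀ _ hRe, Real.mul_self_sqrt hε.le]
  have hzz : ε * (pdz (pdz f) x y z t / ε) = pdz (pdz f) x y z t := mul_div_cancel₀ _ hε.ne'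
  simp only [Lop]
  linear_combination -(Re * √ε) * h - hzz - hsq *
    (pdx (pdx f) x y z t + ε * pdy (pdy f) x y z t + pdz (pdz f) x y z t / ε)

theorem opMomentum_smul_sub_mem_vanishingOn (hε : 0 < ε) (hRe : Re ≠ 0)
    (hS : UniqueDiffOn ℝ S) {f p : SmoothFun4} {D : DiffOp4}
    (h : ∀ x y z t, (x, y, z, t) ∈ S → pdt (curry4 f) x y z t - (√ε / Re) *
      (pdx (pdx (curry4 f)) x y z t + ε * pdy (pdy (curry4 f)) x y z t
        + pdz (pdz (curry4 f)) x y z t / ε) + curry4 (D • p) x y z t = 0) :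
    opMomentum ε Re • f - D • (Re * √ε) • p ∈ vanishingOn S hS := by
  rintro ⟨x, y, z, t⟩ hq
  have hf : curry4 (opMomentum ε Re • f) x y z t = Re * √ε * curry4 (D • p) x y z t := by
    rw [← opMomentum_curry4]
    exact neg_mul_pdt_add_Lop_eq hε hRe (h x y z t hq)
  rw [smul_comm D]
  exact sub_eq_zero.2 hf

theorem sum_opDiv_smul_mem_vanishingOn (hε : ε ≠ 0) (hS : UniqueDiffOn ℝ S) {u v w : SmoothFun4}
    (h : ∀ x y z t, (x, y, z, t) ∈ S → pdx (curry4 u) x y z t + √ε * pdy (curry4 v) x y z t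
      + pdz (curry4 w) x y z t / ε = 0) :
    ∑ i, opDiv ε i • ![u, v, w] i ∈ vanishingOn S hS := by
  rintro ⟨x, y, z, t⟩ hq
  have hdiv := h x y z t hq
  rw [pdx_curry4, pdy_curry4, pdz_curry4] at hdiv
  rw [Fin.sum_univ_three]
  change ε * curry4 (opDx • u) x y z t + ε * √ε * curry4 (opDy • v) x y z t
    + curry4 (opDz • w) x y z t = 0
  field_simp at hdiv
  linear_combination hdiv

theorem uniqueDiffOn_slab {I : Set ℝ} (hI : UniqueDiffOn ℝ I) :
    UniqueDiffOn ℝ {q : ℝ × ℝ × ℝ × ℝ | q.2.2.1 ∈ I} := by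
  have hprod : {q : ℝ × ℝ × ℝ × ℝ | q.2.2.1 ∈ I} =
      Set.univ ×ˢ Set.univ ×ˢ I ×ˢ Set.univ := by
    ext q
    simp
  rw [hprod]
  exact uniqueDiffOn_univ.prod (uniqueDiffOn_univ.prod (hI.prod uniqueDiffOn_univ))

end VolumeEquations

theorem elimination_of_velocity_and_pressure_general
    (ε Re : ℝ) (hε : 0 < ε) (hRe : Re ≠ 0)
    (S : Set (ℝ × ℝ × ℝ × ℝ)) (hS : UniqueDiffOn ℝ S)
    (u v w p : ℝ → ℝ → ℝ → ℝ → ℝ)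
    (hu : ContDiff ℝ ∞ fun q : ℝ × ℝ × ℝ × ℝ => u q.1 q.2.1 q.2.2.1 q.2.2.2)
    (hv : ContDiff ℝ ∞ fun q : ℝ × ℝ × ℝ × ℝ => v q.1 q.2.1 q.2.2.1 q.2.2.2)
    (hw : ContDiff ℝ ∞ fun q : ℝ × ℝ × ℝ × ℝ => w q.1 q.2.1 q.2.2.1 q.2.2.2)
    (hp : ContDiff ℝ ∞ fun q : ℝ × ℝ × ℝ × ℝ => p q.1 q.2.1 q.2.2.1 q.2.2.2)
    (hequ : ∀ x y z t, (x, y, z, t) ∈ S →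
      pdt u x y z t - (√ε / Re) *
        (pdx (pdx u) x y z t + ε * pdy (pdy u) x y z t + pdz (pdz u) x y z t / ε)
        + pdx p x y z t = 0)
    (heqv : ∀ x y z t, (x, y, z, t) ∈ S →
      pdt v x y z t - (√ε / Re) *
        (pdx (pdx v) x y z t + ε * pdy (pdy v) x y z t + pdz (pdz v) x y z t / ε)
        + √ε * pdy p x y z t = 0)
    (heqw : ∀ x y z t, (x, y, z, t) ∈ S →
      pdt w x y z t - (√ε / Re) *
        (pdx (pdx w) x y z t + ε * pdy (pdy w) x y z t + pdz (pdz w) x y z t / ε)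
        + pdz p x y z t = 0)
    (hdiv : ∀ x y z t, (x, y, z, t) ∈ S →
      pdx u x y z t + √ε * pdy v x y z t + pdz w x y z t / ε = 0) :
    ∀ x y z t, (x, y, z, t) ∈ S →
      Lop ε (fun x' y' z' t' =>
        -(Re * √ε) * pdt w x' y' z' t' + Lop ε w x' y' z' t') x y z t = 0 := by
  obtain ⟨u, rfl⟩ := exists_curry4_eq hu
  obtain ⟨v, rfl⟩ := exists_curry4_eq hv
  obtain ⟨w, rfl⟩ := exists_curry4_eq hw
  obtain ⟨p, rfl⟩ := exists_curry4_eq hp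
  have hmom : ∀ i : Fin 3,
      opMomentum ε Re • ![u, v, w] i - opGrad ε i • (Re * √ε) • p ∈ vanishingOn S hS := by
    rw [pdx_curry4 p] at hequ
    rw [pdy_curry4 p] at heqv
    rw [pdz_curry4 p] at heqw
    exact Fin.forall_fin_succ.2 ⟨opMomentum_smul_sub_mem_vanishingOn hε hRe hS hequ,
      Fin.forall_fin_two.2 ⟨opMomentum_smul_sub_mem_vanishingOn hε hRe hS heqv,
        opMomentum_smul_sub_mem_vanishingOn hε hRe hS heqw⟩⟩
  have helim : opL ε • opMomentum ε Re • w ∈ vanishingOn S hS := by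
    rw [← sum_opDiv_mul_opGrad hε.le]
    exact sum_mul_smul_smul_mem_of_sum_smul_mem (R := DiffOp4) (u := ![u, v, w]) hmom
      (sum_opDiv_smul_mem_vanishingOn hε.ne' hS hdiv) 2
  intro x y z t hq
  rw [opMomentum_curry4, Lop_curry4]
  exact helim (x, y, z, t) hq

theorem elimination_of_velocity_and_pressure
    (ε Re : ℝ) (hε : 0 < ε) (hRe : 0 < Re)
    (u v w p : ℝ → ℝ → ℝ → ℝ → ℝ)
    (hu : ContDiff ℝ (⊤ : ℕ∞) (fun q : ℝ × ℝ × ℝ × ℝ => u q.1 q.2.1 q.2.2.1 q.2.2.2))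
    (hv : ContDiff ℝ (⊤ : ℕ∞) (fun q : ℝ × ℝ × ℝ × ℝ => v q.1 q.2.1 q.2.2.1 q.2.2.2))
    (hw : ContDiff ℝ (⊤ : ℕ∞) (fun q : ℝ × ℝ × ℝ × ℝ => w q.1 q.2.1 q.2.2.1 q.2.2.2))
    (hp : ContDiff ℝ (⊤ : ℕ∞) (fun q : ℝ × ℝ × ℝ × ℝ => p q.1 q.2.1 q.2.2.1 q.2.2.2))
    (hequ : ∀ (x y t : ℝ), ∀ z ∈ Set.Icc (0:ℝ) 1,
      pdt u x y z t - (Real.sqrt ε / Re) *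
        (pdx (pdx u) x y z t + ε * pdy (pdy u) x y z t + pdz (pdz u) x y z t / ε)
        + pdx p x y z t = 0)
    (heqv : ∀ (x y t : ℝ), ∀ z ∈ Set.Icc (0:ℝ) 1,
      pdt v x y z t - (Real.sqrt ε / Re) *
        (pdx (pdx v) x y z t + ε * pdy (pdy v) x y z t + pdz (pdz v) x y z t / ε)
        + Real.sqrt ε * pdy p x y z t = 0)
    (heqw : ∀ (x y t : ℝ), ∀ z ∈ Set.Icc (0:ℝ) 1,
      pdt w x y z t - (Real.sqrt ε / Re) *
        (pdx (pdx w) x y z t + ε * pdy (pdy w) x y z t + pdz (pdz w) x y z t / ε)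
        + pdz p x y z t = 0)
    (hdiv : ∀ (x y t : ℝ), ∀ z ∈ Set.Icc (0:ℝ) 1,
      pdx u x y z t + Real.sqrt ε * pdy v x y z t + pdz w x y z t / ε = 0) :
    ∀ (x y t : ℝ), ∀ z ∈ Set.Icc (0:ℝ) 1,
      Lop ε (fun x' y' z' t' =>
        -(Re * Real.sqrt ε) * pdt w x' y' z' t' + Lop ε w x' y' z' t') x y z t = 0 := by
  intro x y t z hz
  exact elimination_of_velocity_and_pressure_general ε Re hε hRe.ne' _
    (uniqueDiffOn_slab (uniqueDiffOn_Icc one_pos)) u v w p hu hv hw hp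
    (fun x y z t => hequ x y t z) (fun x y z t => heqv x y t z)
    (fun x y z t => heqw x y t z) (fun x y z t => hdiv x y t z) x y z t hz
end
end

section
/- Let ε > 0, Re > 0, Bo > 0, k > 0 be real, ω ∈ ℂ, and let μ ∈ ℂ with μ ≠ 0 satisfy μ² = ε k² − i ω Re √ε. Let M be the 4×4 complex matrix with rows (√ε k sinh(√ε k), −√ε k cosh(√ε k), μ sinh μ, −μ cosh μ); (cosh(√ε k), −sinh(√ε k), cosh μ, −sinh μ); (2 k² ε, 0, μ² + ε k², 0); (−k² − k⁴/Bo, √ε ω² k + 2 i ε ω k³/Re, −k² − k⁴/Bo, 2 μ √ε i ω k²/Re). Then det M = 0 if and only if the dispersion relation holds: 4 ε k² μ (ε k² + μ²) + 4 μ k³ ε^{3/2} (μ sinh(k√ε) sinh μ − k√ε cosh(k√ε) cosh μ) − (ε k² + μ²)² (μ cosh(k√ε) cosh μ − k√ε sinh(k√ε) sinh μ) − (k + k³/Bo) √ε Re² (μ sinh(k√ε) cosh μ − k√ε cosh(k√ε) sinh μ) = 0. -/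
noncomputable section

open Complex

/-! With `X = (k * s) ^ 2 - μ ^ 2 = I * ω * (Re * s)`, both entries of the last row that depend on
`ω` are multiples of `X`, and so is the difference of the two nonzero entries of the third row.
Hence `X` factors out of the determinant, and the cofactor is, up to a nonzero constant, the
dispersion function. The factor `X` creates no extra zeros: it vanishes only for `μ = ± k * s`,
where the dispersion function, being odd in `μ` and zero at `μ = k * s`, vanishes as well. -/

/-- The matrix of the linearized boundary conditions. Here `s` stands for `√ε` and `σ` for the
restoring coefficient `1 + k ^ 2 / Bo`; all parameters are allowed to be complex. -/
def boundaryMatrix (s Re σ k ω μ : ℂ) : Matrix (Fin 4) (Fin 4) ℂ :=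
  !![k * s * sinh (k * s), -(k * s) * cosh (k * s), μ * sinh μ, -μ * cosh μ;
    cosh (k * s), -sinh (k * s), cosh μ, -sinh μ;
    2 * (k * s) ^ 2, 0, μ ^ 2 + (k * s) ^ 2, 0;
    -(k ^ 2 * σ), s * ω ^ 2 * k + 2 * I * s ^ 2 * ω * k ^ 3 / Re,
      -(k ^ 2 * σ), 2 * μ * s * I * ω * k ^ 2 / Re]

/-- The left-hand side of the dispersion relation, as a function of the boundary-layer parameter
`μ`. Here `a` stands for `k * √ε` and `g` for the coefficient `(k + k ^ 3 / Bo) * √ε * Re ^ 2` of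
the gravity-capillary term. -/
def dispersionFunction (a g μ : ℂ) : ℂ :=
  4 * a ^ 2 * μ * (a ^ 2 + μ ^ 2)
    + 4 * a ^ 3 * μ * (μ * sinh a * sinh μ - a * cosh a * cosh μ)
    - (a ^ 2 + μ ^ 2) ^ 2 * (μ * cosh a * cosh μ - a * sinh a * sinh μ)
    - g * (μ * sinh a * cosh μ - a * cosh a * sinh μ)

theorem dispersionFunction_neg (a g μ : ℂ) :
    dispersionFunction a g (-μ) = -dispersionFunction a g μ := by
  simp only [dispersionFunction, sinh_neg, cosh_neg]
  ring

theorem dispersionFunction_self (a g : ℂ) : dispersionFunction a g a = 0 := by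
  unfold dispersionFunction
  linear_combination -8 * a ^ 5 * cosh_sq_sub_sinh_sq a

theorem dispersionFunction_eq_zero_of_sq_eq_sq {a μ : ℂ} (g : ℂ) (h : a ^ 2 = μ ^ 2) :
    dispersionFunction a g μ = 0 := by
  obtain rfl | rfl := sq_eq_sq_iff_eq_or_eq_neg.mp h.symm
  · exact dispersionFunction_self μ g
  · rw [dispersionFunction_neg, dispersionFunction_self, neg_zero]

theorem det_of_sq_sub_sq_eq_one {A : Type*} [CommRing A] {C S c d : A}
    (hCS : C ^ 2 - S ^ 2 = 1) (hcd : c ^ 2 - d ^ 2 = 1) (a μ α β γ p q : A) :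
    Matrix.det !![a * S, -a * C, μ * d, -μ * c; C, -S, c, -d; α, 0, β, 0; γ, p, γ, q] =
      α * (μ * p + q * (μ * S * d - a * C * c)) + β * (a * q - p * (μ * C * c - a * S * d))
        + (α - β) * γ * (μ * S * c - a * C * d) := by
  have expand_third_row :
      Matrix.det !![a * S, -a * C, μ * d, -μ * c; C, -S, c, -d; α, 0, β, 0; γ, p, γ, q] =
        α * Matrix.det !![-a * C, μ * d, -μ * c; -S, c, -d; p, γ, q]
          + β * Matrix.det !![a * S, -a * C, -μ * c; C, -S, -d; γ, p, q] := by
    rw [Matrix.det_succ_row _ 2]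
    simp [Fin.sum_univ_four, Matrix.det_fin_three, Fin.succAbove,
      (by decide : Even 4).neg_one_pow]
  have minor_first : Matrix.det !![-a * C, μ * d, -μ * c; -S, c, -d; p, γ, q] =
      μ * p + q * (μ * S * d - a * C * c) + γ * (μ * S * c - a * C * d) := by
    simp only [Matrix.det_fin_three, Matrix.of_apply, Matrix.cons_val', Matrix.cons_val]
    linear_combination μ * p * hcd
  have minor_third : Matrix.det !![a * S, -a * C, -μ * c; C, -S, -d; γ, p, q] =
      a * q - p * (μ * C * c - a * S * d) - γ * (μ * S * c - a * C * d) := by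
    simp only [Matrix.det_fin_three, Matrix.of_apply, Matrix.cons_val', Matrix.cons_val]
    linear_combination a * q * hCS
  rw [expand_third_row, minor_first, minor_third]
  ring

section

variable {s Re σ k ω μ : ℂ}

theorem sq_mul_det_boundaryMatrix (hRe : Re ≠ 0)
    (hμ : μ ^ 2 = (k * s) ^ 2 - I * ω * (Re * s)) :
    Re ^ 2 * s * (boundaryMatrix s Re σ k ω μ).det =
      k * ((k * s) ^ 2 - μ ^ 2) * dispersionFunction (k * s) (σ * (k * s) * Re ^ 2) μ := by
  have hω : I * ω * (Re * s) = (k * s) ^ 2 - μ ^ 2 := by rw [hμ]; ring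
  have potential_entry : Re ^ 2 * s * (s * ω ^ 2 * k + 2 * I * s ^ 2 * ω * k ^ 3 / Re) =
      k * ((k * s) ^ 2 - μ ^ 2) * ((k * s) ^ 2 + μ ^ 2) :=
    calc
      _ = -k * I ^ 2 * (ω * Re * s) ^ 2 + 2 * k * (k * s) ^ 2 * (I * ω * (Re * s)) := by
        rw [I_sq]; field_simp
      _ = k * (I * ω * (Re * s)) * (2 * (k * s) ^ 2 - I * ω * (Re * s)) := by ring
      _ = _ := by rw [hω]; ring
  have boundaryLayer_entry : Re ^ 2 * (2 * μ * s * I * ω * k ^ 2 / Re) =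
      2 * μ * k ^ 2 * ((k * s) ^ 2 - μ ^ 2) := by
    rw [← hω]; field_simp
  rw [boundaryMatrix,
    det_of_sq_sub_sq_eq_one (cosh_sq_sub_sinh_sq (k * s)) (cosh_sq_sub_sinh_sq μ),
    dispersionFunction]
  linear_combination
    (2 * (k * s) ^ 2 * μ
      - (μ ^ 2 + (k * s) ^ 2) * (μ * cosh (k * s) * cosh μ - k * s * sinh (k * s) * sinh μ)) *
      potential_entry
    + s * (2 * (k * s) ^ 2 * (μ * sinh (k * s) * sinh μ - k * s * cosh (k * s) * cosh μ)
      + (μ ^ 2 + (k * s) ^ 2) * (k * s)) * boundaryLayer_entry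

theorem det_iff_dispersion_relation_general (hs : s ≠ 0) (hRe : Re ≠ 0) (hk : k ≠ 0)
    (hμ : μ ^ 2 = (k * s) ^ 2 - I * ω * (Re * s)) :
    (boundaryMatrix s Re σ k ω μ).det = 0 ↔
      dispersionFunction (k * s) (σ * (k * s) * Re ^ 2) μ = 0 := by
  have key := sq_mul_det_boundaryMatrix (σ := σ) hRe hμ
  constructor
  · intro hdet
    rw [hdet, mul_zero, eq_comm, mul_eq_zero, mul_eq_zero, or_iff_right hk] at key
    exact key.elim (fun h ↦ dispersionFunction_eq_zero_of_sq_eq_sq _ (sub_eq_zero.mp h)) id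
  · intro hdisp
    rw [hdisp, mul_zero] at key
    exact (mul_eq_zero_iff_left (mul_ne_zero (pow_ne_zero 2 hRe) hs)).mp key

end

theorem det_iff_dispersion_relation
    (ε Re Bo k : ℝ) (hε : 0 < ε) (hRe : 0 < Re) (hBo : 0 < Bo) (hk : 0 < k)
    (ω μ : ℂ) (hμ0 : μ ≠ 0)
    (hμ : μ ^ 2 = ((ε * k ^ 2 : ℝ) : ℂ) - Complex.I * ω * ((Re * Real.sqrt ε : ℝ) : ℂ))
    (M : Matrix (Fin 4) (Fin 4) ℂ)
    (hM : M = !![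
      ((Real.sqrt ε * k : ℝ) : ℂ) * Complex.sinh ((Real.sqrt ε * k : ℝ) : ℂ),
        -((Real.sqrt ε * k : ℝ) : ℂ) * Complex.cosh ((Real.sqrt ε * k : ℝ) : ℂ),
        μ * Complex.sinh μ, -μ * Complex.cosh μ;
      Complex.cosh ((Real.sqrt ε * k : ℝ) : ℂ), -Complex.sinh ((Real.sqrt ε * k : ℝ) : ℂ),
        Complex.cosh μ, -Complex.sinh μ;
      ((2 * k ^ 2 * ε : ℝ) : ℂ), 0, μ ^ 2 + ((ε * k ^ 2 : ℝ) : ℂ), 0;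
      ((-(k ^ 2) - k ^ 4 / Bo : ℝ) : ℂ),
        ((Real.sqrt ε : ℝ) : ℂ) * ω ^ 2 * (k : ℂ)
          + 2 * Complex.I * (ε : ℂ) * ω * (k : ℂ) ^ 3 / (Re : ℂ),
        ((-(k ^ 2) - k ^ 4 / Bo : ℝ) : ℂ),
        2 * μ * ((Real.sqrt ε : ℝ) : ℂ) * Complex.I * ω * (k : ℂ) ^ 2 / (Re : ℂ)]) :
    M.det = 0 ↔
      ((4 * ε * k ^ 2 : ℝ) : ℂ) * μ * (((ε * k ^ 2 : ℝ) : ℂ) + μ ^ 2)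
        + ((4 * k ^ 3 * (ε * Real.sqrt ε) : ℝ) : ℂ) * μ *
          (μ * Complex.sinh ((k * Real.sqrt ε : ℝ) : ℂ) * Complex.sinh μ
            - ((k * Real.sqrt ε : ℝ) : ℂ) * Complex.cosh ((k * Real.sqrt ε : ℝ) : ℂ)
              * Complex.cosh μ)
        - (((ε * k ^ 2 : ℝ) : ℂ) + μ ^ 2) ^ 2 *
          (μ * Complex.cosh ((k * Real.sqrt ε : ℝ) : ℂ) * Complex.cosh μ
            - ((k * Real.sqrt ε : ℝ) : ℂ) * Complex.sinh ((k * Real.sqrt ε : ℝ) : ℂ)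
              * Complex.sinh μ)
        - (((k + k ^ 3 / Bo) * Real.sqrt ε * Re ^ 2 : ℝ) : ℂ) *
          (μ * Complex.sinh ((k * Real.sqrt ε : ℝ) : ℂ) * Complex.cosh μ
            - ((k * Real.sqrt ε : ℝ) : ℂ) * Complex.cosh ((k * Real.sqrt ε : ℝ) : ℂ)
              * Complex.sinh μ) = 0 := by
  have hε_sq : (ε : ℂ) = (√ε : ℂ) ^ 2 := by exact_mod_cast (Real.sq_sqrt hε.le).symm
  subst hM
  push_cast at hμ ⊢
  convert det_iff_dispersion_relation_general (σ := 1 + (k : ℂ) ^ 2 / Bo) (ω := ω) (μ := μ)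
    (ofReal_ne_zero.mpr (Real.sqrt_pos.mpr hε).ne') (ofReal_ne_zero.mpr hRe.ne')
    (ofReal_ne_zero.mpr hk.ne') (by rw [hμ, hε_sq]; ring) using 2
  · rw [boundaryMatrix, hε_sq]
    ring_nf
  · rw [dispersionFunction, hε_sq]
    ring
end
end

section
/- Let η : ℝ → ℂ be a Schwartz function and let X be a nonzero real number. Then the limit as a → 0⁺ of ∫_ℝ e^{−iXξ} ( ∫₀^∞ η'(ξ+ξ') e^{−aξ'} ξ'^{−1/2} dξ' ) dξ exists and equals i X · ( ∫_ℝ η(u) e^{−iXu} du ) · √(π/2) · (1 + i·sgn(X)) / √|X|. In other words, the Fourier transform of the dissipative half-line convolution term ξ ↦ ∫₀^∞ η_ξ(ξ+ξ')/√ξ' dξ' is the multiplier i X √(π/2)(1 + i sgn X)|X|^{−1/2} applied to the Fourier transform of η. -/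
noncomputable section

open MeasureTheory Filter

/-!
Convolving `η'` over a half-line against the kernel `k(y) = e^{-ay} / √y` multiplies its Fourier
transform by `∫₀^∞ e^{iXy} k(y) dy`, by Fubini and translation invariance; the damping `e^{-ay}`
makes everything absolutely convergent. The substitution `y = x²` turns this multiplier into a
Gaussian integral with complex parameter, equal to `(π / (a - iX))^{1/2}` in the principal branch.
As `a → 0⁺` the base tends to `iπ/X`, which is off the branch cut because `X ≠ 0`, so the limit is
`(iπ/X)^{1/2}`. Finally `η'` contributes the factor `iX`.
-/

section Lemmas

open Complex Set
open scoped FourierTransform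

variable {E : Type*} [NormedAddCommGroup E] [NormedSpace ℂ E]

lemma integral_integral_smul_comp_add {G : Type*} [AddGroup G] [MeasurableSpace G]
    [MeasurableAdd₂ G] [CompleteSpace E] {μ ν : Measure G} [SFinite μ] [SFinite ν]
    [μ.IsAddRightInvariant] {k : G → ℂ} {f : G → E} (hk : Integrable k ν) (hf : Integrable f μ) :
    ∫ x, ∫ y, k y • f (x + y) ∂ν ∂μ = (∫ y, k y ∂ν) • ∫ u, f u ∂μ := by
  have hprod : Integrable (fun z : G × G => k z.2 • f z.1) (μ.prod ν) := (hk.smul_prod hf).swap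
  have hshear : Integrable (Function.uncurry fun x y : G => k y • f (x + y)) (μ.prod ν) :=
    (measurePreserving_add_prod μ ν).integrable_comp_of_integrable hprod
  calc
    ∫ x, ∫ y, k y • f (x + y) ∂ν ∂μ = ∫ y, ∫ x, k y • f (x + y) ∂μ ∂ν :=
      integral_integral_swap hshear
    _ = ∫ y, k y • ∫ u, f u ∂μ ∂ν := by
      simp only [integral_smul, integral_add_right_eq_self]
    _ = (∫ y, k y ∂ν) • ∫ u, f u ∂μ := integral_smul_const k _

lemma integrable_exp_I_mul_smul {μ : Measure ℝ} {f : ℝ → E} (hf : Integrable f μ) (X : ℝ) :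
    Integrable (fun u : ℝ => exp (I * X * u) • f u) μ := by
  refine hf.bdd_smul 1 (by fun_prop) (ae_of_all _ fun u => ?_)
  simp [norm_exp]

lemma integrable_exp_neg_I_mul_smul {μ : Measure ℝ} {f : ℝ → E} (hf : Integrable f μ) (X : ℝ) :
    Integrable (fun u : ℝ => exp (-(I * X * u)) • f u) μ := by
  simpa using integrable_exp_I_mul_smul hf (-X)

lemma integral_exp_smul_integral_smul_comp_add [CompleteSpace E] {ν : Measure ℝ} [SFinite ν]
    {k : ℝ → ℂ} {f : ℝ → E} (hk : Integrable k ν) (hf : Integrable f) (X : ℝ) :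
    ∫ x : ℝ, exp (-(I * X * x)) • ∫ y, k y • f (x + y) ∂ν =
      (∫ y : ℝ, exp (I * X * y) • k y ∂ν) • ∫ u : ℝ, exp (-(I * X * u)) • f u := by
  have hphase (x y : ℝ) :
      exp (-(I * X * x)) = exp (I * X * y) * exp (-(I * X * (x + y : ℝ))) := by
    rw [← exp_add]
    push_cast
    ring_nf
  rw [← integral_integral_smul_comp_add (integrable_exp_I_mul_smul hk X)
    (integrable_exp_neg_I_mul_smul hf X)]
  congr 1 with x
  rw [← integral_smul]
  congr 1 with y
  rw [hphase x y, smul_smul, smul_smul, smul_eq_mul, mul_right_comm]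

lemma integral_exp_smul_deriv {f : ℝ → E} (hf : Integrable f) (hdiff : Differentiable ℝ f)
    (hf' : Integrable (deriv f)) (X : ℝ) :
    ∫ u : ℝ, exp (-(I * X * u)) • deriv f u =
      (I * X) • ∫ u : ℝ, exp (-(I * X * u)) • f u := by
  have hfourier (g : ℝ → E) :
      𝓕 g (X / (2 * Real.pi)) = ∫ u : ℝ, exp (-(I * X * u)) • g u := by
    rw [Real.fourier_real_eq_integral_exp_smul]
    congr! 4 with u
    push_cast
    field_simp
  have hfreq : 2 * Real.pi * I * (X / (2 * Real.pi) : ℝ) = I * X := by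
    push_cast
    field_simp
  simpa only [hfourier, hfreq] using
    congrFun (Real.fourier_deriv hf hdiff hf') (X / (2 * Real.pi))

lemma integral_exp_neg_mul_mul_inv_sqrt_Ioi {r : ℂ} (hr : 0 < r.re) :
    ∫ y : ℝ in Ioi 0, exp (-(r * y)) * (Real.sqrt y : ℂ)⁻¹ =
      (Real.pi / r) ^ (1 / 2 : ℂ) := by
  have hsubst : ∀ x ∈ Ioi (0 : ℝ), ((2 : ℝ) * x ^ ((2 : ℝ) - 1)) •
      (exp (-(r * (x ^ (2 : ℝ) : ℝ))) * (Real.sqrt (x ^ (2 : ℝ)) : ℂ)⁻¹) =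
        2 * exp (-r * (x : ℂ) ^ 2) := by
    intro x hx
    have hx0 : (x : ℂ) ≠ 0 := ofReal_ne_zero.2 (ne_of_gt hx)
    have hsub : (2 : ℝ) - 1 = 1 := by norm_num
    rw [hsub, Real.rpow_one, Real.rpow_two, Real.sqrt_sq (le_of_lt hx), real_smul]
    push_cast
    field_simp
  rw [← integral_comp_rpow_Ioi_of_pos two_pos, setIntegral_congr_fun measurableSet_Ioi hsubst,
    integral_const_mul, integral_gaussian_complex_Ioi hr, mul_div_cancel₀ _ two_ne_zero]

lemma integrableOn_exp_neg_mul_mul_inv_sqrt_Ioi {r : ℂ} (hr : 0 < r.re) :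
    IntegrableOn (fun y : ℝ => exp (-(r * y)) * (Real.sqrt y : ℂ)⁻¹) (Ioi 0) := by
  have hr0 : r ≠ 0 := fun h => by simp [h] at hr
  refine .of_integral_ne_zero ?_
  rw [integral_exp_neg_mul_mul_inv_sqrt_Ioi hr]
  simp [cpow_eq_zero_iff, hr0, Real.pi_ne_zero]

lemma I_mul_ofReal_cpow_half (x : ℝ) :
    (I * x) ^ (1 / 2 : ℂ) = Real.sqrt (|x| / 2) * (1 + I * Real.sign x) := by
  rw [one_div]
  apply Complex.ext
  · simp [cpow_inv_two_re]
  · rcases lt_trichotomy x 0 with hx | rfl | hx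
    · simp [cpow_inv_two_im_eq_neg_sqrt, hx, Real.sign_of_neg]
    · simp
    · simp [cpow_inv_two_im_eq_sqrt, hx.le, hx, Real.sign_of_pos]

lemma pi_div_neg_I_mul_cpow_half {X : ℝ} (hX : X ≠ 0) :
    (Real.pi / (-(I * X))) ^ (1 / 2 : ℂ) =
      Real.sqrt (Real.pi / 2) * (1 + I * Real.sign X) / Real.sqrt |X| := by
  have hbase : Real.pi / (-(I * X)) = I * (Real.pi / X : ℝ) := by
    rw [ofReal_div, div_neg, ← div_div, div_I]
    ring
  have hsign : Real.sign (Real.pi / X) = Real.sign X := by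
    rcases hX.lt_or_gt with h | h
    · rw [Real.sign_of_neg h, Real.sign_of_neg (div_neg_of_pos_of_neg Real.pi_pos h)]
    · rw [Real.sign_of_pos h, Real.sign_of_pos (div_pos Real.pi_pos h)]
  have hsqrt : Real.sqrt (|Real.pi / X| / 2) = Real.sqrt (Real.pi / 2) / Real.sqrt |X| := by
    rw [abs_div, abs_of_pos Real.pi_pos, div_right_comm, Real.sqrt_div (by positivity)]
  rw [hbase, I_mul_ofReal_cpow_half, hsign, hsqrt, ofReal_div, div_mul_eq_mul_div]

lemma tendsto_pi_div_sub_I_mul_cpow_half {X : ℝ} (hX : X ≠ 0) :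
    Tendsto (fun a : ℝ => (Real.pi / (a - I * X)) ^ (1 / 2 : ℂ)) (nhds 0)
      (nhds (Real.sqrt (Real.pi / 2) * (1 + I * Real.sign X) / Real.sqrt |X|)) := by
  have hne : -(I * X) ≠ 0 := by simp [hX]
  have hbase : Tendsto (fun a : ℝ => (Real.pi / (a - I * X) : ℂ)) (nhds 0)
      (nhds (Real.pi / (-(I * X)))) := by
    refine tendsto_const_nhds.div ?_ hne
    simpa using (continuous_ofReal.tendsto 0).sub_const (I * (X : ℂ))
  have hslit : Real.pi / (-(I * X)) ∈ slitPlane := by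
    rw [mem_slitPlane_iff]
    right
    simp [div_im, hX, Real.pi_ne_zero]
  rw [← pi_div_neg_I_mul_cpow_half hX]
  exact hbase.cpow tendsto_const_nhds hslit

lemma integral_exp_smul_integral_damped_inv_sqrt_smul_comp_add [CompleteSpace E]
    {f : ℝ → E} (hf : Integrable f) {a : ℝ} (ha : 0 < a) (X : ℝ) :
    ∫ ξ : ℝ, exp (-(I * X * ξ)) •
        ∫ y in Ioi (0 : ℝ), (exp (-(a * y)) * (Real.sqrt y : ℂ)⁻¹) • f (ξ + y) =
      (Real.pi / (a - I * X)) ^ (1 / 2 : ℂ) • ∫ u : ℝ, exp (-(I * X * u)) • f u := by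
  have hk : IntegrableOn (fun y : ℝ => exp (-(a * y)) * (Real.sqrt y : ℂ)⁻¹) (Ioi 0) :=
    integrableOn_exp_neg_mul_mul_inv_sqrt_Ioi (by simpa using ha)
  have hphase (y : ℝ) : exp (I * X * y) * exp (-(a * y)) = exp (-((a - I * X) * y)) := by
    rw [← exp_add]
    ring_nf
  rw [integral_exp_smul_integral_smul_comp_add hk hf]
  simp only [smul_eq_mul, ← mul_assoc, hphase]
  rw [integral_exp_neg_mul_mul_inv_sqrt_Ioi (by simpa using ha)]

theorem fourier_symbol_of_dissipative_term_general [CompleteSpace E] {η : ℝ → E}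
    (hη : Integrable η) (hdiff : Differentiable ℝ η) (hη' : Integrable (deriv η))
    {X : ℝ} (hX : X ≠ 0) :
    Tendsto (fun a : ℝ => ∫ ξ : ℝ, exp (-(I * X * ξ)) •
        ∫ ξ' in Ioi (0 : ℝ), (exp (-(a * ξ')) * (Real.sqrt ξ' : ℂ)⁻¹) • deriv η (ξ + ξ'))
      (nhdsWithin 0 (Ioi 0))
      (nhds ((Real.sqrt (Real.pi / 2) * (1 + I * Real.sign X) / Real.sqrt |X|) •
        (I * X) • ∫ u : ℝ, exp (-(I * X * u)) • η u)) := by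
  refine (((tendsto_pi_div_sub_I_mul_cpow_half hX).smul_const _).mono_left
    nhdsWithin_le_nhds).congr' ?_
  filter_upwards [self_mem_nhdsWithin] with a ha
  rw [integral_exp_smul_integral_damped_inv_sqrt_smul_comp_add hη' ha,
    integral_exp_smul_deriv hη hdiff hη']

end Lemmas

theorem fourier_symbol_of_dissipative_term
    (η : SchwartzMap ℝ ℂ) (X : ℝ) (hX : X ≠ 0) :
    Tendsto (fun a : ℝ =>
        ∫ ξ : ℝ,
          Complex.exp (-(Complex.I * (X : ℂ) * (ξ : ℂ))) *
            ∫ ξ' in Set.Ioi (0:ℝ),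
              deriv (⇑η) (ξ + ξ') * Complex.exp (-((a : ℂ) * (ξ' : ℂ))) *
                ((Real.sqrt ξ' : ℝ) : ℂ)⁻¹)
      (nhdsWithin 0 (Set.Ioi 0))
      (nhds (Complex.I * (X : ℂ) *
        (∫ u : ℝ, η u * Complex.exp (-(Complex.I * (X : ℂ) * (u : ℂ)))) *
        (((Real.sqrt (Real.pi / 2) : ℝ) : ℂ) * (1 + Complex.I * ((Real.sign X : ℝ) : ℂ)) /
          ((Real.sqrt |X| : ℝ) : ℂ)))) := by
  simpa only [smul_eq_mul, mul_comm, mul_assoc, mul_left_comm] using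
    fourier_symbol_of_dissipative_term_general η.integrable η.differentiable
      (SchwartzMap.derivCLM ℂ ℂ η).integrable hX
end
end
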